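/- arXiv:1402.4690 — 3 statements merged into one kernel-verified Lean document; each statement's English description precedes it below -/
import Mathlib

section
/- Let p ∈ (1,∞) and let b, c ≥ 0. If f, g : [0,1] → ℝ are measurable functions with ∫₀¹ |f|^p = (b+c)^p, ∫₀¹ |g|^p = b^p, and ∫₀¹ |f−g|^p = c^p, then ∫₀¹ |(f+g)/2|^p = (b + c/2)^p. -/
open MeasureTheory Set

/-!
The equality case of Minkowski's inequality is not needed. In `Lᵖ` the hypotheses say that
`‖f‖ = ‖g‖ + ‖f - g‖`, so the distances from `0` to `g` and from `g` to `f` add up. Let `h` be a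
point of the segment from `g` to `f`. The triangle inequality through `g` bounds `‖h‖` above, and
the triangle inequality from `0` to `f` through `h` bounds it below by the same number.
-/

theorem dist_lineMap_of_dist_add_dist_eq_dist {E P : Type*} [SeminormedAddCommGroup E]
    [NormedSpace ℝ E] [PseudoMetricSpace P] [NormedAddTorsor E P] {x y z : P} {θ : ℝ}
    (hθ : θ ∈ Icc 0 1) (h : dist x y + dist y z = dist x z) :
    dist x (AffineMap.lineMap y z θ) = dist x y + θ * dist y z := by
  set w := AffineMap.lineMap y z θ
  have hyw : dist y w = θ * dist y z := by
    rw [dist_left_lineMap, Real.norm_of_nonneg hθ.1]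
  have hwz : dist w z = (1 - θ) * dist y z := by
    rw [dist_lineMap_right, Real.norm_of_nonneg (sub_nonneg.2 hθ.2)]
  apply le_antisymm
  · calc dist x w ≤ dist x y + dist y w := dist_triangle x y w
      _ = dist x y + θ * dist y z := by rw [hyw]
  · linarith [dist_triangle x w z]

section Lp

variable {α E : Type*} {m : MeasurableSpace α} {μ : Measure α} [NormedAddCommGroup E]
  {f g : α → E}

theorem norm_toLp_eq_iff_integral_norm_rpow_eq {p : ENNReal} (hp0 : p ≠ 0) (hp : p ≠ ⊤)
    (hf : MemLp f p μ) {a : ℝ} (ha : 0 ≤ a) :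
    ‖hf.toLp f‖ = a ↔ ∫ t, ‖f t‖ ^ p.toReal ∂μ = a ^ p.toReal := by
  rw [Lp.norm_toLp, toReal_eLpNorm hf.aestronglyMeasurable,
    lpNorm_eq_integral_norm_rpow_toReal hp0 hp hf.aestronglyMeasurable,
    Real.rpow_inv_eq (by positivity) ha (ENNReal.toReal_ne_zero.2 ⟨hp0, hp⟩)]

section LineMap

variable {𝕜 : Type*} [NormedRing 𝕜] [Module 𝕜 E] [IsBoundedSMul 𝕜 E] {p : ENNReal}

theorem memLp_lineMap (hf : MemLp f p μ) (hg : MemLp g p μ) (θ : 𝕜) :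
    MemLp (AffineMap.lineMap f g θ) p μ := by
  rw [AffineMap.lineMap_apply_module']
  exact ((hg.sub hf).const_smul θ).add hf

theorem toLp_lineMap (hf : MemLp f p μ) (hg : MemLp g p μ) (θ : 𝕜) :
    (memLp_lineMap hf hg θ).toLp _ = AffineMap.lineMap (hf.toLp f) (hg.toLp g) θ := by
  simp only [AffineMap.lineMap_apply_module']
  rfl

end LineMap

variable [NormedSpace ℝ E]

theorem boundary_face_two_general {p b c θ : ℝ} (hp : 1 ≤ p) (hb : 0 ≤ b) (hc : 0 ≤ c)
    (hθ : θ ∈ Icc 0 1) (hfm : AEStronglyMeasurable f μ) (hgm : AEStronglyMeasurable g μ)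
    (hfi : Integrable (fun t => ‖f t‖ ^ p) μ) (hgi : Integrable (fun t => ‖g t‖ ^ p) μ)
    (hf : ∫ t, ‖f t‖ ^ p ∂μ = (b + c) ^ p) (hg : ∫ t, ‖g t‖ ^ p ∂μ = b ^ p)
    (hfg : ∫ t, ‖f t - g t‖ ^ p ∂μ = c ^ p) :
    ∫ t, ‖AffineMap.lineMap (g t) (f t) θ‖ ^ p ∂μ = (b + θ * c) ^ p := by
  lift p to NNReal using zero_le_one.trans hp
  have : Fact (1 ≤ (p : ENNReal)) := ⟨by exact_mod_cast hp⟩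
  have hp0 : (p : ENNReal) ≠ 0 := (zero_lt_one.trans_le Fact.out).ne'
  have norm_toLp_eq_iff {u : α → E} (hu : MemLp u p μ) {a : ℝ} (ha : 0 ≤ a) :=
    norm_toLp_eq_iff_integral_norm_rpow_eq hp0 ENNReal.coe_ne_top hu ha
  have hfLp : MemLp f p μ := (integrable_norm_rpow_iff hfm hp0 ENNReal.coe_ne_top).1 hfi
  have hgLp : MemLp g p μ := (integrable_norm_rpow_iff hgm hp0 ENNReal.coe_ne_top).1 hgi
  have norm_f : ‖hfLp.toLp f‖ = b + c := (norm_toLp_eq_iff hfLp (add_nonneg hb hc)).2 hf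
  have norm_g : ‖hgLp.toLp g‖ = b := (norm_toLp_eq_iff hgLp hb).2 hg
  have dist_g_f : dist (hgLp.toLp g) (hfLp.toLp f) = c := by
    rw [dist_comm, dist_eq_norm, ← MemLp.toLp_sub]
    exact (norm_toLp_eq_iff (hfLp.sub hgLp) hc).2 hfg
  have dist_add : dist 0 (hgLp.toLp g) + dist (hgLp.toLp g) (hfLp.toLp f) =
      dist 0 (hfLp.toLp f) := by
    rw [dist_zero_left, dist_zero_left, norm_f, norm_g, dist_g_f]
  have norm_lineMap : ‖AffineMap.lineMap (hgLp.toLp g) (hfLp.toLp f) θ‖ = b + θ * c := by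
    simpa only [dist_zero_left, norm_g, dist_g_f] using
      dist_lineMap_of_dist_add_dist_eq_dist hθ dist_add
  rw [← toLp_lineMap] at norm_lineMap
  simpa only [AffineMap.pi_lineMap_apply] using!
    (norm_toLp_eq_iff _ (add_nonneg hb (mul_nonneg hθ.1 hc))).1 norm_lineMap

end Lp

/-- Boundary condition on the face `x₂^{1/p} + x₃^{1/p} = x₁^{1/p}`: if
`∫|f|^p = (b+c)^p`, `∫|g|^p = b^p` and `∫|f−g|^p = c^p`, then
`∫|(f+g)/2|^p = (b + c/2)^p`. -/
theorem boundary_face_two (p b c : ℝ) (hp1 : 1 < p) (hb : 0 ≤ b) (hc : 0 ≤ c)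
    (f g : ℝ → ℝ) (hfm : Measurable f) (hgm : Measurable g)
    (hfi : IntegrableOn (fun t => |f t| ^ p) (Icc 0 1))
    (hgi : IntegrableOn (fun t => |g t| ^ p) (Icc 0 1))
    (hf : (∫ t in Icc (0:ℝ) 1, |f t| ^ p) = (b + c) ^ p)
    (hg : (∫ t in Icc (0:ℝ) 1, |g t| ^ p) = b ^ p)
    (hfg : (∫ t in Icc (0:ℝ) 1, |f t - g t| ^ p) = c ^ p) :
    (∫ t in Icc (0:ℝ) 1, |(f t + g t) / 2| ^ p) = (b + c / 2) ^ p := by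
  have lineMap_half (t : ℝ) : AffineMap.lineMap (g t) (f t) (1 / 2 : ℝ) = (f t + g t) / 2 := by
    rw [AffineMap.lineMap_apply_ring']
    ring
  simpa only [lineMap_half, one_div_mul_eq_div] using!
    boundary_face_two_general hp1.le hb hc (θ := 1 / 2) ⟨by norm_num, by norm_num⟩
      hfm.aestronglyMeasurable hgm.aestronglyMeasurable hfi hgi hf hg hfg
end

section
/- Let p ∈ (1,2) and ε ∈ (0,2), and let t* > 1/2 be the (unique) real number with t*^p + |1−t*|^p = 2ε^{−p}. Set h(t*) = (t* − 1/2)^{p−1} / (t*^{p−1} − sgn(1−t*)·|1−t*|^{p−1}). Then for every t ≥ 1/2 one has (t* − 1/2)^p + h(t*)·(t^p + |1−t|^p − 2ε^{−p}) ≥ (t − 1/2)^p. -/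
/-!
In terms of `f t = (t - 1/2) ^ p` and `g t = t ^ p + |1 - t| ^ p` the claim says that the graph of
`f` as a function of `g` lies below its tangent at `t*`. By Cauchy's mean value theorem this holds
as soon as `g' > 0` and `f' / g'` is antitone on `(1/2, ∞)`. Put `q = p - 1`, `x = t - 1/2`, and let
`S` be the odd extension of `x ^ q`. Then `f' / g' = x ^ q / (S (x + 1/2) + S (x - 1/2))`, which by
homogeneity is the reciprocal of `S (1 + v) + S (1 - v)` at `v = 1 / (2 * x)`; that sum is antitone
in `v ≥ 0` because `S` is odd and concave on `[0, ∞)`.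
-/

open Set

lemma add_le_add_of_concaveOn_of_mem_segment {𝕜 E β : Type*} [Field 𝕜] [LinearOrder 𝕜]
    [IsStrictOrderedRing 𝕜] [AddCommGroup E] [Module 𝕜 E] [AddCommGroup β] [PartialOrder β]
    [IsOrderedAddMonoid β] [Module 𝕜 β] {s : Set E} {f : E → β} (hf : ConcaveOn 𝕜 s f)
    {x y a b : E} (hx : x ∈ s) (hy : y ∈ s) (ha : a ∈ segment 𝕜 x y) (hab : a + b = x + y) :
    f x + f y ≤ f a + f b := by
  obtain ⟨u, v, hu, hv, huv, rfl⟩ := ha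
  have hb : b = v • x + u • y := by
    rw [eq_sub_of_add_eq' hab, eq_sub_of_add_eq huv]
    module
  calc f x + f y = (u • f x + v • f y) + (v • f x + u • f y) := by
        rw [eq_sub_of_add_eq huv]
        module
    _ ≤ f (u • x + v • y) + f b := by
        rw [hb]
        exact add_le_add (hf.2 hx hy hu hv huv) (hf.2 hx hy hv hu (by rwa [add_comm]))

lemma antitoneOn_add_sub_of_odd_of_concaveOn {f : ℝ → ℝ} (hodd : f.Odd)
    (hf : ConcaveOn ℝ (Ici 0) f) {c : ℝ} (hc : 0 ≤ c) :
    AntitoneOn (fun x ↦ f (c + x) + f (c - x)) (Ici 0) := by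
  have left : AntitoneOn (fun x ↦ f (c + x) + f (c - x)) (Icc 0 c) := by
    rintro x ⟨hx, -⟩ y ⟨hy, hyc⟩ hxy
    have h : f (c - y) + f (c + y) ≤ f (c + x) + f (c - x) :=
      add_le_add_of_concaveOn_of_mem_segment hf (mem_Ici.2 (by linarith)) (mem_Ici.2 (by linarith))
        (Icc_subset_segment ⟨by linarith, by linarith⟩) (by ring)
    linarith
  have right : AntitoneOn (fun x ↦ f (c + x) + f (c - x)) (Ici c) := by
    intro x (hx : c ≤ x) y _ hxy
    have h : f (x - c) + f (c + y) ≤ f (c + x) + f (y - c) :=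
      add_le_add_of_concaveOn_of_mem_segment hf (mem_Ici.2 (by linarith)) (mem_Ici.2 (by linarith))
        (Icc_subset_segment ⟨by linarith, by linarith⟩) (by ring)
    have hoddx : f (c - x) = -f (x - c) := by rw [← hodd, neg_sub]
    have hoddy : f (c - y) = -f (y - c) := by rw [← hodd, neg_sub]
    dsimp only
    linarith
  rw [← Icc_union_Ici_eq_Ici hc]
  exact left.union_right right (isGreatest_Icc hc) isLeast_Ici

lemma image_le_add_div_mul_sub_of_antitoneOn_deriv_div {s : Set ℝ} (hs : Convex ℝ s)
    {f g f' g' : ℝ → ℝ} (hf : ContinuousOn f s) (hg : ContinuousOn g s)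
    (hf' : ∀ x ∈ interior s, HasDerivAt f (f' x) x)
    (hg' : ∀ x ∈ interior s, HasDerivAt g (g' x) x) (hpos : ∀ x ∈ interior s, 0 < g' x)
    (hanti : AntitoneOn (fun x ↦ f' x / g' x) (interior s)) {a t : ℝ} (ha : a ∈ interior s)
    (ht : t ∈ s) : f t ≤ f a + f' a / g' a * (g t - g a) := by
  have has := interior_subset ha
  have hmono : StrictMonoOn g s := strictMonoOn_of_hasDerivWithinAt_pos hs hg
    (fun x hx ↦ (hg' x hx).hasDerivWithinAt) hpos
  have cauchy : ∀ x ∈ s, ∀ y ∈ s, x < y →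
      ∃ c ∈ interior s, c ∈ Ioo x y ∧ f y - f x = f' c / g' c * (g y - g x) := by
    intro x hx y hy hxy
    have hIcc : Icc x y ⊆ s := hs.ordConnected.out hx hy
    have hIoo : Ioo x y ⊆ interior s := interior_maximal (Ioo_subset_Icc_self.trans hIcc) isOpen_Ioo
    obtain ⟨c, hc, hslope⟩ := exists_ratio_hasDerivAt_eq_ratio_slope f f' hxy (hf.mono hIcc)
      (fun z hz ↦ hf' z (hIoo hz)) g g' (hg.mono hIcc) (fun z hz ↦ hg' z (hIoo hz))
    refine ⟨c, hIoo hc, hc, ?_⟩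
    rw [div_mul_eq_mul_div, eq_div_iff (hpos c (hIoo hc)).ne', ← hslope, mul_comm]
  rcases lt_trichotomy a t with hat | rfl | hta
  · obtain ⟨c, hcs, hc, hslope⟩ := cauchy a has t ht hat
    have hratio : f' c / g' c ≤ f' a / g' a := hanti ha hcs hc.1.le
    have hgt : 0 ≤ g t - g a := sub_nonneg.2 (hmono has ht hat).le
    linarith [mul_le_mul_of_nonneg_right hratio hgt]
  · simp only [sub_self, mul_zero, add_zero, le_refl]
  · obtain ⟨c, hcs, hc, hslope⟩ := cauchy t ht a has hta
    have hratio : f' a / g' a ≤ f' c / g' c := hanti hcs ha hc.2.le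
    have hgt : 0 ≤ g a - g t := sub_nonneg.2 (hmono ht has hta).le
    linarith [mul_le_mul_of_nonneg_right hratio hgt]

/-- The signed power `sgn x * |x| ^ q`, which for `q ≠ 0` is the odd extension of `x ^ q` from
`[0, ∞)` to the real line. -/
noncomputable def signedRpow (q x : ℝ) : ℝ :=
  Real.sign x * |x| ^ q

section SignedRpow

variable {q : ℝ}

lemma signedRpow_of_pos {x : ℝ} (hx : 0 < x) : signedRpow q x = x ^ q := by
  rw [signedRpow, Real.sign_of_pos hx, abs_of_pos hx, one_mul]

lemma signedRpow_of_nonneg (hq : q ≠ 0) {x : ℝ} (hx : 0 ≤ x) : signedRpow q x = x ^ q := by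
  rcases hx.eq_or_lt with rfl | hx
  · rw [signedRpow, Real.sign_zero, zero_mul, Real.zero_rpow hq]
  · exact signedRpow_of_pos hx

lemma signedRpow_odd (q : ℝ) : (signedRpow q).Odd := fun x ↦ by
  rw [signedRpow, signedRpow, Real.sign_neg, abs_neg, neg_mul]

lemma signedRpow_mul_of_pos {c : ℝ} (hc : 0 < c) (x : ℝ) :
    signedRpow q (c * x) = c ^ q * signedRpow q x := by
  have hsign : Real.sign (c * x) = Real.sign x := by
    simp only [Real.sign, mul_neg_iff, mul_pos_iff, hc, hc.not_gt, true_and, false_and, or_false]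
  rw [signedRpow, signedRpow, hsign, abs_mul, abs_of_pos hc, Real.mul_rpow hc.le (abs_nonneg x)]
  ring

lemma signedRpow_strictMono (hq : 0 < q) : StrictMono (signedRpow q) :=
  strictMono_of_odd_strictMonoOn_nonneg (signedRpow_odd q) <|
    (Real.strictMonoOn_rpow_Ici_of_exponent_pos hq).congr fun _ hx ↦
      (signedRpow_of_nonneg hq.ne' hx).symm

lemma concaveOn_signedRpow (hq₀ : 0 < q) (hq₁ : q ≤ 1) : ConcaveOn ℝ (Ici 0) (signedRpow q) :=
  (Real.concaveOn_rpow hq₀.le hq₁).congr fun _ hx ↦ (signedRpow_of_nonneg hq₀.ne' hx).symm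

lemma hasDerivAt_abs_rpow_signedRpow {p : ℝ} (hp : 1 < p) (x : ℝ) :
    HasDerivAt (fun y ↦ |y| ^ p) (p * signedRpow (p - 1) x) x := by
  refine (hasDerivAt_abs_rpow x hp).congr_deriv ?_
  rcases eq_or_ne x 0 with rfl | hx
  · simp only [signedRpow, Real.sign_zero, mul_zero, zero_mul]
  · have hsign : x = Real.sign x * |x| := by
      rcases hx.lt_or_gt with h | h
      · rw [Real.sign_of_neg h, abs_of_neg h, neg_one_mul, neg_neg]
      · rw [Real.sign_of_pos h, abs_of_pos h, one_mul]
    have hpow : |x| ^ (p - 1) = |x| ^ (p - 2) * |x| := by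
      rw [← Real.rpow_add_one (abs_ne_zero.2 hx)]
      ring_nf
    rw [signedRpow, hpow]
    linear_combination p * |x| ^ (p - 2) * hsign

lemma signedRpow_add_add_sub_pos (hq : 0 < q) {x : ℝ} (hx : 0 < x) (c : ℝ) :
    0 < signedRpow q (x + c) + signedRpow q (x - c) := by
  have h : signedRpow q (c - x) < signedRpow q (x + c) := signedRpow_strictMono hq (by linarith)
  rw [← neg_sub x c, signedRpow_odd] at h
  linarith

lemma signedRpow_add_add_sub_eq_rpow_mul {x : ℝ} (hx : 0 < x) (c : ℝ) :
    signedRpow q (x + c) + signedRpow q (x - c) =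
      x ^ q * (signedRpow q (1 + c / x) + signedRpow q (1 - c / x)) := by
  rw [mul_add, ← signedRpow_mul_of_pos hx, ← signedRpow_mul_of_pos hx, mul_one_add, mul_one_sub,
    mul_div_cancel₀ c hx.ne']

lemma antitoneOn_rpow_div_signedRpow_add_add_sub (hq₀ : 0 < q) (hq₁ : q ≤ 1) {c : ℝ} (hc : 0 ≤ c) :
    AntitoneOn (fun x ↦ x ^ q / (signedRpow q (x + c) + signedRpow q (x - c))) (Ioi 0) := by
  intro x (hx : 0 < x) y (hy : 0 < y) hxy
  have hsum : signedRpow q (1 + c / x) + signedRpow q (1 - c / x) ≤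
      signedRpow q (1 + c / y) + signedRpow q (1 - c / y) :=
    antitoneOn_add_sub_of_odd_of_concaveOn (signedRpow_odd q) (concaveOn_signedRpow hq₀ hq₁)
      zero_le_one (div_nonneg hc hy.le) (div_nonneg hc hx.le) (div_le_div_of_nonneg_left hc hx hxy)
  dsimp only
  rw [div_le_div_iff₀ (signedRpow_add_add_sub_pos hq₀ hy c) (signedRpow_add_add_sub_pos hq₀ hx c),
    signedRpow_add_add_sub_eq_rpow_mul hx, signedRpow_add_add_sub_eq_rpow_mul hy,
    mul_left_comm (x ^ q)]
  gcongr

end SignedRpow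

lemma hasDerivAt_rpow_add_abs_one_sub_rpow {p : ℝ} (hp : 1 < p) (t : ℝ) :
    HasDerivAt (fun t ↦ t ^ p + |1 - t| ^ p)
      (p * (t ^ (p - 1) - signedRpow (p - 1) (1 - t))) t := by
  rw [mul_sub, sub_eq_add_neg]
  exact (Real.hasDerivAt_rpow_const (Or.inr hp.le)).add
    ((hasDerivAt_abs_rpow_signedRpow hp (1 - t)).comp_const_sub 1 t)

lemma rpow_sub_signedRpow_one_sub {q t : ℝ} (ht : 0 < t) :
    t ^ q - signedRpow q (1 - t) =
      signedRpow q (t - 1 / 2 + 1 / 2) + signedRpow q (t - 1 / 2 - 1 / 2) := by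
  have hsub : t - 1 / 2 - 1 / 2 = -(1 - t) := by ring
  rw [sub_add_cancel, hsub, signedRpow_odd, signedRpow_of_pos ht, ← sub_eq_add_neg]

lemma rpow_sub_signedRpow_one_sub_pos {q t : ℝ} (hq : 0 < q) (ht : 1 / 2 < t) :
    0 < t ^ q - signedRpow q (1 - t) := by
  rw [rpow_sub_signedRpow_one_sub (one_half_pos.trans ht)]
  exact signedRpow_add_add_sub_pos hq (sub_pos.2 ht) _

lemma antitoneOn_sub_half_rpow_div {q : ℝ} (hq₀ : 0 < q) (hq₁ : q ≤ 1) :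
    AntitoneOn (fun t : ℝ ↦ (t - 1 / 2) ^ q / (t ^ q - signedRpow q (1 - t))) (Ioi (1 / 2)) := by
  intro s (hs : 1 / 2 < s) t (ht : 1 / 2 < t) hst
  dsimp only
  rw [rpow_sub_signedRpow_one_sub (one_half_pos.trans hs),
    rpow_sub_signedRpow_one_sub (one_half_pos.trans ht)]
  exact antitoneOn_rpow_div_signedRpow_add_add_sub hq₀ hq₁ one_half_pos.le
    (sub_pos.2 hs) (sub_pos.2 ht) (sub_le_sub_right hst _)

/-- For `1 < p < 2`, `ε ∈ (0,2)` and `t* > 1/2` with `t*^p + |1−t*|^p = 2ε^{−p}`, the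
tangent plane dominates: for every `t ≥ 1/2`,
`(t*−1/2)^p + h(t*)·(t^p + |1−t|^p − 2ε^{−p}) ≥ (t−1/2)^p`, where
`h(t*) = (t*−1/2)^{p−1} / (t*^{p−1} − sgn(1−t*)·|1−t*|^{p−1})`. -/
theorem tangent_plane_majorization (p ε tstar : ℝ) (hp1 : 1 < p) (hp2 : p < 2)
    (hε0 : 0 < ε) (hε2 : ε < 2) (htstar : 1/2 < tstar)
    (heq : tstar ^ p + |1 - tstar| ^ p = 2 * ε ^ (-p)) :
    ∀ t : ℝ, 1/2 ≤ t →
      (t - 1/2) ^ p ≤ (tstar - 1/2) ^ p +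
        ((tstar - 1/2) ^ (p - 1) /
            (tstar ^ (p - 1) - Real.sign (1 - tstar) * |1 - tstar| ^ (p - 1))) *
          (t ^ p + |1 - t| ^ p - 2 * ε ^ (-p)) := by
  intro t ht
  have hq : 0 < p - 1 := by linarith
  have hf' (x : ℝ) : HasDerivAt (fun x ↦ (x - 1 / 2) ^ p) (p * (x - 1 / 2) ^ (p - 1)) x :=
    (Real.hasDerivAt_rpow_const (Or.inr hp1.le)).comp_sub_const x (1 / 2)
  have hg' := hasDerivAt_rpow_add_abs_one_sub_rpow hp1
  have hpos (x : ℝ) (hx : 1 / 2 < x) :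
      0 < p * (x ^ (p - 1) - signedRpow (p - 1) (1 - x)) :=
    mul_pos (by linarith) (rpow_sub_signedRpow_one_sub_pos hq hx)
  have hanti : AntitoneOn (fun x : ℝ ↦ p * (x - 1 / 2) ^ (p - 1) /
      (p * (x ^ (p - 1) - signedRpow (p - 1) (1 - x)))) (Ioi (1 / 2)) := by
    simpa only [mul_div_mul_left _ _ (show p ≠ 0 by linarith)] using
      antitoneOn_sub_half_rpow_div hq (show p - 1 ≤ 1 by linarith)
  rw [← interior_Ici] at hanti
  have key := image_le_add_div_mul_sub_of_antitoneOn_deriv_div (convex_Ici (1 / 2))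
    (HasDerivAt.continuousOn fun x _ ↦ hf' x) (HasDerivAt.continuousOn fun x _ ↦ hg' x)
    (fun x _ ↦ hf' x) (fun x _ ↦ hg' x) (fun x hx ↦ hpos x (by rwa [interior_Ici] at hx)) hanti
    (by rwa [interior_Ici]) (mem_Ici.2 ht)
  rwa [mul_div_mul_left _ _ (by linarith), heq] at key
end

section
/- Let p ∈ (1,2) and ε ∈ (0,2]. Then there exists a unique t* ∈ [1/2, ∞) with t*^p + |1−t*|^p = 2ε^{−p}, and the number δ = 1 − ε(t* − 1/2) lies in [0,1] and is the unique solution in [0,1] of the equation (1 − δ + ε/2)^p + |1 − δ − ε/2|^p = 2. -/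
/-!
For `1 < p` the function `u ↦ |u + h| ^ p + |u - h| ^ p` is even and strictly convex, hence strictly
increasing on `[0, ∞)`. With `t = s + 1/2` and `1 - δ = ε * s`, the two equations read
`|s + 1/2| ^ p + |s - 1/2| ^ p = 2 * ε ^ (-p)` and `|ε * s + ε/2| ^ p + |ε * s - ε/2| ^ p = 2`, and
homogeneity of degree `p` turns one into the other.
-/

open Set

theorem strictMonoOn_Ici_of_strictConvexOn_of_even {𝕜 β : Type*} [Field 𝕜] [LinearOrder 𝕜]
    [IsStrictOrderedRing 𝕜] [AddCommMonoid β] [LinearOrder β] [IsOrderedAddMonoid β]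
    [Module 𝕜 β] [PosSMulStrictMono 𝕜 β] {f : 𝕜 → β} (hf : StrictConvexOn 𝕜 univ f)
    (heven : f.Even) : StrictMonoOn f (Ici 0) := by
  intro u (hu : 0 ≤ u) v _ huv
  have hmem : u ∈ openSegment 𝕜 (-v) v := by
    rw [openSegment_eq_Ioo (by linarith)]
    exact ⟨by linarith, huv⟩
  simpa only [heven v, max_self] using
    hf.lt_on_openSegment (mem_univ _) (mem_univ _) (by linarith) hmem

theorem strictConvexOn_comp_norm {E : Type*} [NormedAddCommGroup E] [NormedSpace ℝ E]
    [StrictConvexSpace ℝ E] {f : ℝ → ℝ} (hf : StrictConvexOn ℝ (Ici 0) f)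
    (hmono : StrictMonoOn f (Ici 0)) : StrictConvexOn ℝ univ fun x : E => f ‖x‖ := by
  refine ⟨convex_univ, fun x _ y _ hxy a b ha hb hab => ?_⟩
  obtain hnorm | hnorm := eq_or_ne ‖x‖ ‖y‖
  · calc f ‖a • x + b • y‖ < f ‖y‖ :=
          hmono (norm_nonneg _) (norm_nonneg _) (norm_combo_lt_of_ne hnorm.le le_rfl hxy ha hb hab)
      _ = a • f ‖x‖ + b • f ‖y‖ := by rw [hnorm, Convex.combo_self hab]
  · have hle : ‖a • x + b • y‖ ≤ a • ‖x‖ + b • ‖y‖ :=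
      convexOn_univ_norm.2 (mem_univ x) (mem_univ y) ha.le hb.le hab
    calc f ‖a • x + b • y‖ ≤ f (a • ‖x‖ + b • ‖y‖) :=
          hmono.monotoneOn (norm_nonneg _) ((norm_nonneg _).trans hle) hle
      _ < a • f ‖x‖ + b • f ‖y‖ := hf.2 (norm_nonneg x) (norm_nonneg y) hnorm ha hb hab

theorem strictConvexOn_norm_rpow {E : Type*} [NormedAddCommGroup E] [NormedSpace ℝ E]
    [StrictConvexSpace ℝ E] {p : ℝ} (hp : 1 < p) :
    StrictConvexOn ℝ univ fun x : E => ‖x‖ ^ p :=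
  strictConvexOn_comp_norm (strictConvexOn_rpow hp)
    (Real.strictMonoOn_rpow_Ici_of_exponent_pos (by linarith))

/-- The two-point power sum of Hanner's inequality, through which both equations are compared. The
absolute value around `u + h` makes it even in `u` on the whole line. -/
noncomputable def hannerSum (p h u : ℝ) : ℝ :=
  |u + h| ^ p + |u - h| ^ p

namespace hannerSum

variable {p h r u : ℝ}

theorem eq_of_add_nonneg (hu : 0 ≤ u + h) : hannerSum p h u = (u + h) ^ p + |u - h| ^ p := by
  rw [hannerSum, abs_of_nonneg hu]

theorem even (p h : ℝ) : (hannerSum p h).Even := fun u => by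
  rw [hannerSum, hannerSum, add_comm, neg_sub_left, abs_neg, neg_add_eq_sub, abs_sub_comm,
    add_comm h u]

theorem swap (p h u : ℝ) : hannerSum p h u = hannerSum p u h := by
  rw [hannerSum, hannerSum, add_comm u h, abs_sub_comm]

theorem apply_zero (p h : ℝ) : hannerSum p h 0 = 2 * |h| ^ p := by
  rw [hannerSum, zero_add, zero_sub, abs_neg, two_mul]

theorem mul_mul (p c h u : ℝ) : hannerSum p (c * h) (c * u) = |c| ^ p * hannerSum p h u := by
  simp only [hannerSum, ← mul_add, ← mul_sub, abs_mul, Real.mul_rpow (abs_nonneg _) (abs_nonneg _)]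

theorem continuous (hp : 0 ≤ p) (h : ℝ) : Continuous (hannerSum p h) :=
  ((continuous_id.add continuous_const).abs.rpow_const fun _ => Or.inr hp).add
    ((continuous_id.sub continuous_const).abs.rpow_const fun _ => Or.inr hp)

theorem strictConvexOn (hp : 1 < p) (h : ℝ) : StrictConvexOn ℝ univ (hannerSum p h) := by
  have habs : StrictConvexOn ℝ univ fun x : ℝ => |x| ^ p := strictConvexOn_norm_rpow hp
  simpa only [sub_eq_add_neg] using! (habs.translate_left h).add (habs.translate_left (-h))

theorem strictMonoOn (hp : 1 < p) (h : ℝ) : StrictMonoOn (hannerSum p h) (Ici 0) :=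
  strictMonoOn_Ici_of_strictConvexOn_of_even (strictConvexOn hp h) (even p h)

theorem exists_eq_two_mul_rpow (hp : 1 < p) (hh : 0 ≤ h) (hhr : h ≤ r) :
    ∃ u ∈ Icc 0 r, hannerSum p h u = 2 * r ^ p := by
  have hr : 0 ≤ r := hh.trans hhr
  have hlower : hannerSum p h 0 ≤ 2 * r ^ p := by
    rw [apply_zero, abs_of_nonneg hh]
    gcongr
  have hupper : 2 * r ^ p ≤ hannerSum p h r :=
    calc 2 * r ^ p = hannerSum p r 0 := by rw [apply_zero, abs_of_nonneg hr]
      _ ≤ hannerSum p r h := (strictMonoOn hp r).monotoneOn self_mem_Ici hh hh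
      _ = hannerSum p h r := swap p r h
  exact intermediate_value_Icc hr (continuous (by linarith) h).continuousOn ⟨hlower, hupper⟩

theorem rpow_add_abs_one_sub_rpow (p : ℝ) {t : ℝ} (ht : 0 ≤ t) :
    t ^ p + |1 - t| ^ p = hannerSum p (1/2) (t - 1/2) := by
  rw [eq_of_add_nonneg (by linarith), abs_sub_comm 1 t]
  ring_nf

end hannerSum

theorem parametric_vs_implicit_modulus_general (p ε : ℝ) (hp : 1 < p)
    (hε0 : 0 < ε) (hε2 : ε ≤ 2) :
    ∃ tstar : ℝ, (1/2 ≤ tstar ∧ tstar ^ p + |1 - tstar| ^ p = 2 * ε ^ (-p)) ∧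
      (∀ t : ℝ, 1/2 ≤ t → t ^ p + |1 - t| ^ p = 2 * ε ^ (-p) → t = tstar) ∧
      (0 ≤ 1 - ε * (tstar - 1/2) ∧ 1 - ε * (tstar - 1/2) ≤ 1) ∧
      ((1 - (1 - ε * (tstar - 1/2)) + ε/2) ^ p
          + |1 - (1 - ε * (tstar - 1/2)) - ε/2| ^ p = 2) ∧
      (∀ δ : ℝ, δ ≤ 1 →
        (1 - δ + ε/2) ^ p + |1 - δ - ε/2| ^ p = 2 → δ = 1 - ε * (tstar - 1/2)) := by
  obtain ⟨s, ⟨hs0, hs1⟩, hs⟩ := hannerSum.exists_eq_two_mul_rpow hp (h := 1/2) (r := ε⁻¹)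
    (by norm_num) (by rw [one_div]; gcongr)
  rw [Real.inv_rpow hε0.le, ← Real.rpow_neg hε0.le] at hs
  have hεs0 : 0 ≤ ε * s := by positivity
  have hεs1 : ε * s ≤ 1 := (le_inv_mul_iff₀ hε0).1 (by rwa [mul_one])
  have hεs : hannerSum p (ε/2) (ε * s) = 2 := by
    rw [div_eq_mul_one_div, hannerSum.mul_mul, hs, abs_of_pos hε0, mul_left_comm,
      ← Real.rpow_add hε0, add_neg_cancel, Real.rpow_zero, mul_one]
  refine ⟨s + 1/2, ⟨by linarith, ?_⟩, fun t ht heq => ?_, ?_⟩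
  · rwa [hannerSum.rpow_add_abs_one_sub_rpow p (by linarith), add_sub_cancel_right]
  · rw [hannerSum.rpow_add_abs_one_sub_rpow p (by linarith)] at heq
    have hts : t - 1/2 = s :=
      (hannerSum.strictMonoOn hp (1/2)).injOn (mem_Ici.2 (by linarith)) hs0 (heq.trans hs.symm)
    linarith
  rw [add_sub_cancel_right, sub_sub_cancel, ← hannerSum.eq_of_add_nonneg (by linarith)]
  refine ⟨⟨by linarith, by linarith⟩, hεs, fun δ hδ heq => ?_⟩
  rw [← hannerSum.eq_of_add_nonneg (by linarith)] at heq
  have hδs : 1 - δ = ε * s :=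
    (hannerSum.strictMonoOn hp (ε/2)).injOn (mem_Ici.2 (by linarith)) hεs0 (heq.trans hεs.symm)
  linarith

/-- For `1 < p < 2` and `ε ∈ (0,2]`, there is a unique `t* ∈ [1/2,∞)` with
`t*^p + |1−t*|^p = 2ε^{−p}`, and `δ = 1 − ε(t*−1/2)` lies in `[0,1]` and is the unique
solution in `[0,1]` of `(1 − δ + ε/2)^p + |1 − δ − ε/2|^p = 2`. -/
theorem parametric_vs_implicit_modulus (p ε : ℝ) (hp1 : 1 < p) (hp2 : p < 2)
    (hε0 : 0 < ε) (hε2 : ε ≤ 2) :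
    ∃ tstar : ℝ, (1/2 ≤ tstar ∧ tstar ^ p + |1 - tstar| ^ p = 2 * ε ^ (-p)) ∧
      (∀ t : ℝ, 1/2 ≤ t → t ^ p + |1 - t| ^ p = 2 * ε ^ (-p) → t = tstar) ∧
      (0 ≤ 1 - ε * (tstar - 1/2) ∧ 1 - ε * (tstar - 1/2) ≤ 1) ∧
      ((1 - (1 - ε * (tstar - 1/2)) + ε/2) ^ p
          + |1 - (1 - ε * (tstar - 1/2)) - ε/2| ^ p = 2) ∧
      (∀ δ : ℝ, 0 ≤ δ → δ ≤ 1 →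
        (1 - δ + ε/2) ^ p + |1 - δ - ε/2| ^ p = 2 → δ = 1 - ε * (tstar - 1/2)) := by
  obtain ⟨tstar, ht, htuniq, hδ, hδeq, hδuniq⟩ :=
    parametric_vs_implicit_modulus_general p ε hp1 hε0 hε2
  exact ⟨tstar, ht, htuniq, hδ, hδeq, fun δ _ => hδuniq δ⟩
end
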